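/- Let (X,d) be a compact metric space of negative type. A Borel probability measure μ on X is diversity-maximizing if and only if there exists a constant C > 0 such that the function Zμ(x) = ∫ e^{−d(x,y)} dμ(y) equals C at every point of the support of μ and satisfies Zμ(x) ≥ C for every x ∈ X. In that case C = ⟨μ,μ⟩_W, i.e. C is the reciprocal of the maximum diversity of X. -/

import Mathlib

open MeasureTheory Real

/-- The similarity form ⟨μ,ν⟩_W = ∬ e^{-d(x,y)} dμ(x) dν(y) for (nonnegative) Borel
measures. -/
noncomputable def simFormP {X : Type*} [MetricSpace X] [MeasurableSpace X]
    (μ ν : Measure X) : ℝ :=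
  ∫ x, ∫ y, Real.exp (-dist x y) ∂ν ∂μ

/-- The support of a Borel measure: points all of whose open neighbourhoods have
positive measure. -/
def measSupport {X : Type*} [TopologicalSpace X] [MeasurableSpace X]
    (μ : Measure X) : Set X :=
  {x | ∀ U : Set X, IsOpen U → x ∈ U → 0 < μ U}

/-- The function Zμ(x) = ∫ e^{-d(x,y)} dμ(y). -/
noncomputable def Zfun {X : Type*} [MetricSpace X] [MeasurableSpace X]
    (μ : Measure X) (x : X) : ℝ :=
  ∫ y, Real.exp (-dist x y) ∂μ

/-!
For a space of negative type, `e^{-d}` is the pullback of a Gaussian kernel on a Hilbert space. Up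
to a rank-one factor a Gaussian kernel is the entrywise exponential of a Gram matrix, so by the
Schur product theorem it is positive semidefinite, hence itself the Gram matrix of a feature map
`Φ`. Thus `⟨μ, ν⟩_W` is the inner product of `∫ Φ dμ` and `∫ Φ dν`, and `μ ↦ ⟨μ, μ⟩_W` is convex.

A measure therefore minimizes `⟨μ, μ⟩_W` exactly when the first variation towards every Dirac mass
is nonnegative, i.e. when `⟨μ, μ⟩_W ≤ Zμ` everywhere. Since `⟨μ, μ⟩_W` is the `μ`-average of the
continuous function `Zμ`, this inequality is an equality on the support of `μ`.
-/

universe u v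

open Filter Topology
open scoped BoundedContinuousFunction ComplexOrder InnerProductSpace NNReal RealInnerProductSpace

section PositiveSemidefinite

variable {ι : Type u} {𝕜 : Type v} [RCLike 𝕜] {E : Type*} [SeminormedAddCommGroup E]

theorem posSemidef_gram [InnerProductSpace 𝕜 E] (v : ι → E) :
    (Matrix.gram 𝕜 v).PosSemidef := by
  refine ⟨Matrix.isHermitian_gram 𝕜 v, fun c ↦ ?_⟩
  have h : (c.sum fun i a ↦ c.sum fun j b ↦ star a * Matrix.gram 𝕜 v i j * b)
      = ⟪c.sum fun i a ↦ a • v i, c.sum fun j b ↦ b • v j⟫_𝕜 := by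
    simp only [Finsupp.sum, sum_inner, inner_smul_left]
    simp only [inner_sum, inner_smul_right, Finset.sum_mul, Matrix.gram_apply, RCLike.star_def,
      mul_assoc, mul_comm, mul_left_comm]
  rw [h, inner_self_eq_norm_sq_to_K]
  positivity

theorem posSemidef_of_star_mul (f : ι → 𝕜) :
    (Matrix.of fun i j ↦ star (f i) * f j).PosSemidef := by
  convert posSemidef_gram (𝕜 := 𝕜) f using 1
  ext i j
  simp [mul_comm]

theorem isClosed_setOf_posSemidef {R : Type*} [Ring R] [PartialOrder R] [StarRing R]
    [TopologicalSpace R] [IsTopologicalSemiring R] [ContinuousStar R] [OrderClosedTopology R] :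
    IsClosed {A : Matrix ι ι R | A.PosSemidef} := by
  have hquad (c : ι →₀ R) :
      IsClosed {A : Matrix ι ι R | 0 ≤ c.sum fun i a ↦ c.sum fun j b ↦ star a * A i j * b} :=
    isClosed_le continuous_const <| continuous_finsetSum _ fun i _ ↦
      continuous_finsetSum _ fun j _ ↦
        (continuous_const.mul (continuous_id.matrix_elem i j)).mul continuous_const
  simp only [Matrix.PosSemidef, Set.ofPred_and, Set.ofPred_forall]
  exact (isClosed_eq continuous_id.matrix_conjTranspose continuous_id).inter
    (isClosed_iInter hquad)

theorem posSemidef_map_pow {A : Matrix ι ι 𝕜} (hA : A.PosSemidef) (n : ℕ) :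
    (A.map (· ^ n)).PosSemidef := by
  induction n with
  | zero =>
    convert posSemidef_of_star_mul (fun _ : ι ↦ (1 : 𝕜)) using 1
    ext i j
    simp
  | succ n ih =>
    have h : A.map (· ^ (n + 1)) = (A.map (· ^ n)).hadamard A := by
      ext i j
      simp [pow_succ]
    exact h ▸ ih.hadamard hA

theorem posSemidef_map_exp {A : Matrix ι ι 𝕜} (hA : A.PosSemidef) :
    (A.map NormedSpace.exp).PosSemidef := by
  have hsum : HasSum (fun n : ℕ ↦ (n.factorial : 𝕜)⁻¹ • A.map (· ^ n))
      (A.map NormedSpace.exp) := by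
    refine Pi.hasSum.mpr fun i ↦ Pi.hasSum.mpr fun j ↦ ?_
    simpa [div_eq_inv_mul] using NormedSpace.expSeries_div_hasSum_exp (A i j)
  exact isClosed_setOf_posSemidef.mem_of_tendsto hsum <| .of_forall fun s ↦
    Matrix.posSemidef_sum s fun n _ ↦ (posSemidef_map_pow hA n).smul (by positivity)

theorem posSemidef_gaussian [InnerProductSpace ℝ E] (v : ι → E) {c : ℝ} (hc : 0 ≤ c) :
    (Matrix.of fun i j ↦ exp (-(c * ‖v i - v j‖ ^ 2))).PosSemidef := by
  have h : (Matrix.of fun i j ↦ exp (-(c * ‖v i - v j‖ ^ 2)))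
      = (Matrix.of fun i j ↦ star (exp (-(c * ‖v i‖ ^ 2))) * exp (-(c * ‖v j‖ ^ 2))).hadamard
        (((2 * c) • Matrix.gram ℝ v).map NormedSpace.exp) := by
    ext i j
    simp only [Matrix.of_apply, Matrix.hadamard_apply, Matrix.map_apply, Matrix.smul_apply,
      Matrix.gram_apply, smul_eq_mul, star_trivial, ← exp_eq_exp_ℝ, ← exp_add, norm_sub_sq_real]
    ring_nf
  rw [h]
  exact (posSemidef_of_star_mul _).hadamard
    (posSemidef_map_exp ((posSemidef_gram v).smul (by positivity)))

theorem exists_gram_eq_of_posSemidef {K : Matrix ι ι 𝕜} (hK : K.PosSemidef) :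
    ∃ (F : Type (max u v)) (_ : NormedAddCommGroup F) (_ : InnerProductSpace 𝕜 F)
      (_ : CompleteSpace F) (Φ : ι → F), Matrix.gram 𝕜 Φ = K := by
  let L : Matrix ι ι (𝕜 →L[𝕜] 𝕜) := K.map fun a ↦ a • ContinuousLinearMap.id 𝕜 𝕜
  have hL : L.PosSemidef := by
    have hherm : L.IsHermitian := hK.1.map _ fun a ↦ by
      ext
      simp [ContinuousLinearMap.star_eq_adjoint, ContinuousLinearMap.adjoint_id]
    have hquad (c : ι →₀ 𝕜) :
        0 ≤ RCLike.re (c.sum fun i a ↦ c.sum fun j b ↦ ⟪L j i a, b⟫_𝕜) := by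
      convert (RCLike.nonneg_iff.mp (hK.2 c)).1 using 8 with i a j b
      simp [L, ← hK.1.apply i j, mul_comm]
    have htfae := RKHS.posSemidef_tfae (K := L)
    exact (htfae.out 0 2).mpr (And.intro hherm hquad)
  have : Fact L.PosSemidef := ⟨hL⟩
  refine ⟨RKHS.OfKernel L, inferInstance, inferInstance, inferInstance,
    fun i ↦ RKHS.kerFun (RKHS.OfKernel L) i 1, ?_⟩
  ext i j
  simp [RKHS.kerFun_apply, L, ← hK.1.apply i j]

end PositiveSemidefinite

section InnerProduct

variable {X E 𝕜 : Type*} [RCLike 𝕜] [SeminormedAddCommGroup E] [InnerProductSpace 𝕜 E]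

theorem continuous_of_continuous_inner [TopologicalSpace X] {Φ : X → E}
    (h : Continuous fun p : X × X ↦ ⟪Φ p.1, Φ p.2⟫_𝕜) : Continuous Φ := by
  have hsq (x y : X) : ‖Φ y - Φ x‖ ^ 2 =
      RCLike.re (⟪Φ y, Φ y⟫_𝕜) - 2 * RCLike.re (⟪Φ y, Φ x⟫_𝕜) + RCLike.re (⟪Φ x, Φ x⟫_𝕜) := by
    rw [norm_sub_sq (𝕜 := 𝕜), inner_self_eq_norm_sq, inner_self_eq_norm_sq]
  refine continuous_iff_continuousAt.mpr fun x ↦ tendsto_iff_norm_sub_tendsto_zero.mpr ?_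
  have hcont : Continuous fun y ↦ √(‖Φ y - Φ x‖ ^ 2) := by
    simp only [hsq]
    have h₁ : Continuous fun y ↦ ⟪Φ y, Φ y⟫_𝕜 := h.comp (continuous_id.prodMk continuous_id)
    have h₂ : Continuous fun y ↦ ⟪Φ y, Φ x⟫_𝕜 := h.comp (continuous_id.prodMk continuous_const)
    fun_prop
  simpa using hcont.tendsto x

end InnerProduct

section Measure

variable {X : Type*} [MeasurableSpace X]

theorem integral_pos_of_forall_pos {f : X → ℝ} {μ : Measure X} [NeZero μ] (hf : Integrable f μ)
    (hpos : ∀ x, 0 < f x) : 0 < ∫ x, f x ∂μ := by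
  have hsupp : Function.support f = Set.univ := Set.eq_univ_of_forall fun x ↦ (hpos x).ne'
  rw [integral_pos_iff_support_of_nonneg (fun x ↦ (hpos x).le) hf, hsupp]
  exact NeZero.pos (μ Set.univ)

variable [TopologicalSpace X] {μ : Measure X} [IsProbabilityMeasure μ]

theorem integral_eq_of_forall_mem_support [HereditarilyLindelofSpace X] {E : Type*}
    [NormedAddCommGroup E] [NormedSpace ℝ E] [CompleteSpace E] {f : X → E} {c : E}
    (h : ∀ x ∈ μ.support, f x = c) : ∫ x, f x ∂μ = c := by
  have hae : ∀ᵐ x ∂μ, f x = c := mem_of_superset Measure.support_mem_ae h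
  simp [integral_congr_ae hae]

theorem eq_integral_of_mem_support_of_integral_le {f : X → ℝ} (hf : Continuous f)
    (hint : Integrable f μ) (hle : ∀ x, ∫ y, f y ∂μ ≤ f x) {x : X} (hx : x ∈ μ.support) :
    f x = ∫ y, f y ∂μ := by
  have hae : ∀ᵐ x ∂μ, f x = ∫ y, f y ∂μ := by
    have hzero : ∫ x, (f x - ∫ y, f y ∂μ) ∂μ = 0 := by
      rw [integral_sub hint (integrable_const _)]
      simp
    rw [integral_eq_zero_iff_of_nonneg (fun x ↦ sub_nonneg.mpr (hle x))
      (hint.sub (integrable_const _))] at hzero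
    exact hzero.mono fun x hx ↦ sub_eq_zero.mp hx
  exact Measure.support_subset_of_isClosed (isClosed_eq hf continuous_const) hae hx

end Measure

section KernelEnergy

variable {X : Type*} [TopologicalSpace X] [MeasurableSpace X]

/-- The potential of a measure with respect to a kernel, which generalizes `Zfun`. Kernels are
bundled as bounded continuous functions, so that all integrals against finite measures converge. -/
noncomputable def kernelPotential (K : X × X →ᵇ ℝ) (μ : Measure X) (x : X) : ℝ :=
  ∫ y, K (x, y) ∂μ

/-- The mutual energy of two measures with respect to a kernel, which generalizes `simFormP`;
diversity-maximizing measures minimize the self-energy of the kernel `e^{-d}`. -/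
noncomputable def kernelEnergy (K : X × X →ᵇ ℝ) (μ ν : Measure X) : ℝ :=
  ∫ x, kernelPotential K ν x ∂μ

variable [OpensMeasurableSpace X] (K : X × X →ᵇ ℝ) (μ ν ρ : Measure X)
  [IsFiniteMeasure μ] [IsFiniteMeasure ν] [IsFiniteMeasure ρ]

theorem integrable_kernel_section (x : X) : Integrable (fun y ↦ K (x, y)) μ :=
  (K.compContinuous ⟨fun y ↦ (x, y), by fun_prop⟩).integrable μ

section FirstCountable

variable [FirstCountableTopology X]

theorem continuous_kernelPotential : Continuous (kernelPotential K μ) :=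
  continuous_of_dominated (bound := fun _ ↦ ‖K‖)
    (fun x ↦ (integrable_kernel_section K μ x).aestronglyMeasurable)
    (fun _ ↦ .of_forall fun _ ↦ K.norm_coe_le_norm _) (integrable_const _)
    (.of_forall fun _ ↦ by fun_prop)

theorem integrable_kernelPotential : Integrable (kernelPotential K ν) μ :=
  .of_bound (continuous_kernelPotential K ν).aestronglyMeasurable (‖K‖ * ν.real Set.univ) <|
    .of_forall fun _ ↦ norm_integral_le_of_norm_le_const <|
      .of_forall fun _ ↦ K.norm_coe_le_norm _

theorem kernelEnergy_dirac_left (x : X) :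
    kernelEnergy K (Measure.dirac x) μ = kernelPotential K μ x :=
  integral_dirac' _ x (continuous_kernelPotential K μ).stronglyMeasurable

theorem kernelEnergy_pos [NeZero μ] [NeZero ν] (hK : ∀ p, 0 < K p) : 0 < kernelEnergy K μ ν :=
  integral_pos_of_forall_pos (integrable_kernelPotential K μ ν) fun x ↦
    integral_pos_of_forall_pos (integrable_kernel_section K ν x) fun _ ↦ hK _

theorem kernelEnergy_add_smul_left (a b : ℝ≥0) :
    kernelEnergy K (a • μ + b • ν) ρ = a * kernelEnergy K μ ρ + b * kernelEnergy K ν ρ := by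
  unfold kernelEnergy
  rw [integral_add_measure (integrable_kernelPotential K _ ρ) (integrable_kernelPotential K _ ρ),
    integral_smul_nnreal_measure, integral_smul_nnreal_measure]
  rfl

end FirstCountable

variable [SecondCountableTopology X]

theorem kernelEnergy_comm (hK : ∀ x y, K (x, y) = K (y, x)) :
    kernelEnergy K μ ν = kernelEnergy K ν μ := by
  have hint : Integrable (Function.uncurry fun x y ↦ K (x, y)) (μ.prod ν) := K.integrable _
  unfold kernelEnergy kernelPotential
  rw [integral_integral_swap hint]
  simp only [hK]

theorem kernelEnergy_self_add_smul (hK : ∀ x y, K (x, y) = K (y, x)) (a b : ℝ≥0) :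
    kernelEnergy K (a • μ + b • ν) (a • μ + b • ν) = a ^ 2 * kernelEnergy K μ μ
      + 2 * a * b * kernelEnergy K μ ν + b ^ 2 * kernelEnergy K ν ν := by
  rw [kernelEnergy_add_smul_left, kernelEnergy_comm K μ _ hK, kernelEnergy_comm K ν _ hK,
    kernelEnergy_add_smul_left, kernelEnergy_add_smul_left, kernelEnergy_comm K ν μ hK]
  ring

theorem kernelEnergy_eq_inner_integral {E : Type*} [NormedAddCommGroup E] [InnerProductSpace ℝ E]
    [CompleteSpace E] {Φ : X → E} (hΦ : ∀ x y, ⟪Φ x, Φ y⟫ = K (x, y)) :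
    kernelEnergy K μ ν = ⟪∫ x, Φ x ∂μ, ∫ y, Φ y ∂ν⟫ := by
  have hcont : Continuous Φ := by
    refine continuous_of_continuous_inner (𝕜 := ℝ) ?_
    simpa only [hΦ] using K.continuous
  have hbound (x : X) : ‖Φ x‖ ≤ √‖K‖ := by
    refine Real.le_sqrt_of_sq_le ?_
    rw [← real_inner_self_eq_norm_sq, hΦ]
    exact (le_abs_self _).trans (K.norm_coe_le_norm _)
  have hint (α : Measure X) [IsFiniteMeasure α] : Integrable Φ α :=
    .of_bound hcont.aestronglyMeasurable _ (.of_forall hbound)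
  unfold kernelEnergy kernelPotential
  rw [real_inner_comm, ← integral_inner (hint μ)]
  refine integral_congr_ae (.of_forall fun x ↦ ?_)
  simp only [← hΦ, integral_inner (hint ν), real_inner_comm]

theorem two_mul_kernelEnergy_le (hK : (Matrix.of fun x y ↦ K (x, y)).PosSemidef) :
    2 * kernelEnergy K μ ν ≤ kernelEnergy K μ μ + kernelEnergy K ν ν := by
  obtain ⟨E, _, _, _, Φ, hΦ⟩ := exists_gram_eq_of_posSemidef hK
  have hinner (x y : X) : ⟪Φ x, Φ y⟫ = K (x, y) := congr_fun₂ hΦ x y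
  simp only [kernelEnergy_eq_inner_integral K _ _ hinner]
  have h := real_inner_self_nonneg (x := (∫ x, Φ x ∂μ) - ∫ x, Φ x ∂ν)
  rw [real_inner_sub_sub_self] at h
  linarith

end KernelEnergy

section Minimizer

theorem nonneg_of_forall_nonneg_add_mul {a b : ℝ}
    (h : ∀ t ∈ Set.Ioo (0 : ℝ) 1, 0 ≤ a + t * b) : 0 ≤ a := by
  have hlim : Tendsto (fun t ↦ a + t * b) (𝓝[>] 0) (𝓝 (a + 0 * b)) :=
    (Continuous.tendsto (by fun_prop) 0).mono_left nhdsWithin_le_nhds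
  simpa using ge_of_tendsto hlim (eventually_of_mem (Ioo_mem_nhdsGT one_pos) h)

variable {X : Type*} [TopologicalSpace X] [SecondCountableTopology X] [MeasurableSpace X]
  [OpensMeasurableSpace X] {K : X × X →ᵇ ℝ} {μ : Measure X} [IsProbabilityMeasure μ]

theorem kernelEnergy_self_le_of_forall_self_le (hK : ∀ x y, K (x, y) = K (y, x))
    (hmin : ∀ ν : Measure X, IsProbabilityMeasure ν → kernelEnergy K μ μ ≤ kernelEnergy K ν ν)
    (ν : Measure X) [IsProbabilityMeasure ν] : kernelEnergy K μ μ ≤ kernelEnergy K ν μ := by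
  suffices h : ∀ t ∈ Set.Ioo (0 : ℝ) 1, 0 ≤ 2 * (kernelEnergy K ν μ - kernelEnergy K μ μ)
      + t * (kernelEnergy K ν ν - 2 * kernelEnergy K ν μ + kernelEnergy K μ μ) by
    linarith [nonneg_of_forall_nonneg_add_mul h]
  intro t ht
  let s : unitInterval := ⟨t, ht.1.le, ht.2.le⟩
  have h := hmin (unitInterval.toNNReal s • ν + unitInterval.toNNReal (unitInterval.symm s) • μ)
    inferInstance
  rw [kernelEnergy_self_add_smul K ν μ hK] at h
  simp only [unitInterval.coe_toNNReal, unitInterval.coe_symm_eq, s] at h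
  refine nonneg_of_mul_nonneg_right ?_ ht.1
  linarith

theorem forall_kernelEnergy_self_le_iff (hK : (Matrix.of fun x y ↦ K (x, y)).PosSemidef) :
    (∀ ν : Measure X, IsProbabilityMeasure ν → kernelEnergy K μ μ ≤ kernelEnergy K ν ν) ↔
      ∀ x, kernelEnergy K μ μ ≤ kernelPotential K μ x := by
  refine ⟨fun hmin x ↦ ?_, fun hle ν _ ↦ ?_⟩
  · have hsymm (x y : X) : K (x, y) = K (y, x) := hK.1.apply y x
    simpa only [kernelEnergy_dirac_left] using
      kernelEnergy_self_le_of_forall_self_le hsymm hmin (.dirac x)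
  · have hν : kernelEnergy K μ μ ≤ kernelEnergy K ν μ := by
      simpa [kernelEnergy] using
        integral_mono (integrable_const _) (integrable_kernelPotential K ν μ) hle
    linarith [two_mul_kernelEnergy_le K ν μ hK]

theorem forall_kernelEnergy_self_le_iff_exists
    (hK : (Matrix.of fun x y ↦ K (x, y)).PosSemidef) :
    (∀ ν : Measure X, IsProbabilityMeasure ν → kernelEnergy K μ μ ≤ kernelEnergy K ν ν) ↔
      ∃ C, (∀ x ∈ μ.support, kernelPotential K μ x = C) ∧ ∀ x, C ≤ kernelPotential K μ x := by
  rw [forall_kernelEnergy_self_le_iff hK]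
  constructor
  · intro hle
    exact ⟨_, fun x ↦ eq_integral_of_mem_support_of_integral_le (continuous_kernelPotential K μ)
      (integrable_kernelPotential K μ μ) hle, hle⟩
  · rintro ⟨C, hC, hle⟩
    have hvalue : kernelEnergy K μ μ = C := integral_eq_of_forall_mem_support hC
    exact hvalue ▸ hle

end Minimizer

section Similarity

theorem measSupport_eq_support {X : Type*} [TopologicalSpace X] [MeasurableSpace X]
    (μ : Measure X) : measSupport μ = μ.support := by
  rw [Measure.support_eq_forall_isOpen]
  ext x
  exact forall_congr' fun U ↦ forall_comm

/-- The similarity kernel `e^{-d}`, whose potentials and energies are `Zfun` and `simFormP`. -/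
noncomputable def similarityKernel (X : Type*) [PseudoMetricSpace X] : X × X →ᵇ ℝ :=
  .ofNormedAddCommGroup (fun p ↦ exp (-dist p.1 p.2)) (by fun_prop) 1 (by simp)

theorem posSemidef_similarityKernel {X H : Type*} [PseudoMetricSpace X] [SeminormedAddCommGroup H]
    [InnerProductSpace ℝ H] {φ : X → H} (hφ : ∀ x y : X, ‖φ x - φ y‖ ^ 2 = dist x y) :
    (Matrix.of fun x y ↦ similarityKernel X (x, y)).PosSemidef := by
  have h := posSemidef_gaussian φ zero_le_one
  simp only [hφ, one_mul] at h
  exact h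

variable {X : Type*} [MetricSpace X] [MeasurableSpace X] (μ : Measure X)

theorem Zfun_eq_kernelPotential : Zfun μ = kernelPotential (similarityKernel X) μ := rfl

theorem simFormP_eq_kernelEnergy (ν : Measure X) :
    simFormP μ ν = kernelEnergy (similarityKernel X) μ ν := rfl

end Similarity

theorem stmt7_general {X : Type*} [MetricSpace X] [SecondCountableTopology X]
    [MeasurableSpace X] [OpensMeasurableSpace X]
    {H : Type*} [SeminormedAddCommGroup H] [InnerProductSpace ℝ H]
    (φ : X → H) (hφ : ∀ x y : X, ‖φ x - φ y‖ ^ 2 = dist x y)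
    (μ : Measure X) (hμ : IsProbabilityMeasure μ) :
    ((∀ ν : Measure X, IsProbabilityMeasure ν → simFormP μ μ ≤ simFormP ν ν) ↔
      ∃ C : ℝ, 0 < C ∧ (∀ x ∈ measSupport μ, Zfun μ x = C) ∧ ∀ x : X, C ≤ Zfun μ x) ∧
    (∀ C : ℝ, (∀ x ∈ measSupport μ, Zfun μ x = C) → C = simFormP μ μ) := by
  simp only [simFormP_eq_kernelEnergy, Zfun_eq_kernelPotential, measSupport_eq_support]
  have hvalue (C : ℝ) (hC : ∀ x ∈ μ.support, kernelPotential (similarityKernel X) μ x = C) :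
      C = kernelEnergy (similarityKernel X) μ μ := (integral_eq_of_forall_mem_support hC).symm
  have hpos : 0 < kernelEnergy (similarityKernel X) μ μ :=
    kernelEnergy_pos _ μ μ fun _ ↦ exp_pos _
  rw [forall_kernelEnergy_self_le_iff_exists (posSemidef_similarityKernel hφ)]
  exact ⟨⟨fun ⟨C, hC, hle⟩ ↦ ⟨C, hvalue C hC ▸ hpos, hC, hle⟩,
    fun ⟨C, _, hC, hle⟩ ↦ ⟨C, hC, hle⟩⟩, hvalue⟩

theorem stmt7 {X : Type*} [MetricSpace X] [CompactSpace X]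
    [MeasurableSpace X] [BorelSpace X]
    {H : Type*} [NormedAddCommGroup H] [InnerProductSpace ℝ H] [CompleteSpace H]
    (φ : X → H) (hφ : ∀ x y : X, ‖φ x - φ y‖ ^ 2 = dist x y)
    (μ : Measure X) (hμ : IsProbabilityMeasure μ) :
    ((∀ ν : Measure X, IsProbabilityMeasure ν → simFormP μ μ ≤ simFormP ν ν) ↔
      ∃ C : ℝ, 0 < C ∧ (∀ x ∈ measSupport μ, Zfun μ x = C) ∧ ∀ x : X, C ≤ Zfun μ x) ∧
    (∀ C : ℝ, 0 < C → (∀ x ∈ measSupport μ, Zfun μ x = C) → (∀ x : X, C ≤ Zfun μ x) →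
      C = simFormP μ μ) := by
  obtain ⟨hiff, hvalue⟩ := stmt7_general φ hφ μ hμ
  exact ⟨hiff, fun C _ hC _ ↦ hvalue C hC⟩
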